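/- arXiv:2209.13580 — 7 statements merged into one kernel-verified Lean document; each statement's English description precedes it below -/
import Mathlib

section
/- If a complex Banach algebra A is cyclically weakly amenable, then A is essential, i.e. the linear span of {ab : a, b ∈ A} is dense in A. -/
/-- `D : A →L[ℂ] A →L[ℂ] ℂ` (viewed as a continuous linear map `A → A*`) is a
derivation: `D(ab) = D(a)·b + a·D(b)`, where `⟨F·a, x⟩ = ⟨F, ax⟩` and
`⟨a·F, x⟩ = ⟨F, xa⟩`. -/
def IsDerivation {A : Type*} [NonUnitalNormedRing A] [NormedSpace ℂ A]
    (D : A →L[ℂ] A →L[ℂ] ℂ) : Prop :=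
  ∀ a b x : A, D (a * b) x = D a (b * x) + D b (x * a)

/-- `D` is inner: `D = ad_F` for some `F ∈ A*`, i.e. `⟨D(a), b⟩ = F(ab) - F(ba)`. -/
def IsInnerDerivation {A : Type*} [NonUnitalNormedRing A] [NormedSpace ℂ A]
    (D : A →L[ℂ] A →L[ℂ] ℂ) : Prop :=
  ∃ F : A →L[ℂ] ℂ, ∀ a b : A, D a b = F (a * b) - F (b * a)

/-- `D` is cyclic: `⟨D(a), b⟩ + ⟨D(b), a⟩ = 0`. -/
def IsCyclicDerivation {A : Type*} [NonUnitalNormedRing A] [NormedSpace ℂ A]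
    (D : A →L[ℂ] A →L[ℂ] ℂ) : Prop :=
  ∀ a b : A, D a b + D b a = 0

/-- `A` is weakly amenable: every continuous derivation `A → A*` is inner. -/
def WeaklyAmenable (A : Type*) [NonUnitalNormedRing A] [NormedSpace ℂ A] : Prop :=
  ∀ D : A →L[ℂ] A →L[ℂ] ℂ, IsDerivation D → IsInnerDerivation D

/-- `A` is cyclically amenable: every continuous cyclic derivation `A → A*` is inner. -/
def CyclicallyAmenable (A : Type*) [NonUnitalNormedRing A] [NormedSpace ℂ A] : Prop :=
  ∀ D : A →L[ℂ] A →L[ℂ] ℂ, IsDerivation D → IsCyclicDerivation D → IsInnerDerivation D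

/-- `A` is cyclically weakly amenable: every continuous derivation `A → A*` is cyclic. -/
def CyclicallyWeaklyAmenable (A : Type*) [NonUnitalNormedRing A] [NormedSpace ℂ A] : Prop :=
  ∀ D : A →L[ℂ] A →L[ℂ] ℂ, IsDerivation D → IsCyclicDerivation D

/-- `A` is essential: the linear span of products is dense in `A`. -/
def Essential (A : Type*) [NonUnitalNormedRing A] [NormedSpace ℂ A] : Prop :=
  Dense ((Submodule.span ℂ {x : A | ∃ a b : A, a * b = x} : Submodule ℂ A) : Set A)

/-- `φ` is a character of `A`, i.e. `φ ∈ Δ(A)`: a nonzero multiplicative linear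
functional (characters on Banach algebras are automatically continuous). -/
def IsCharacter {A : Type*} [NonUnitalNormedRing A] [NormedSpace ℂ A]
    (φ : A →L[ℂ] ℂ) : Prop :=
  φ ≠ 0 ∧ ∀ a b : A, φ (a * b) = φ a * φ b

/-- `d ∈ A*` is a continuous point derivation at `φ`. -/
def IsPointDerivation {A : Type*} [NonUnitalNormedRing A] [NormedSpace ℂ A]
    (φ d : A →L[ℂ] ℂ) : Prop :=
  ∀ a b : A, d (a * b) = d a * φ b + φ a * d b

/-- `A` is point amenable: every continuous point derivation at some `φ ∈ Δ(A)` is zero. -/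
def PointAmenable (A : Type*) [NonUnitalNormedRing A] [NormedSpace ℂ A] : Prop :=
  ∀ φ d : A →L[ℂ] ℂ, IsCharacter φ → IsPointDerivation φ d → d = 0

/-- `A` is 0-point amenable: every continuous point derivation at some
`φ ∈ Δ₀(A) = Δ(A) ∪ {0}` is zero. -/
def ZeroPointAmenable (A : Type*) [NonUnitalNormedRing A] [NormedSpace ℂ A] : Prop :=
  ∀ φ d : A →L[ℂ] ℂ, (IsCharacter φ ∨ φ = 0) → IsPointDerivation φ d → d = 0

/-!
By Hahn–Banach, if the products do not span a dense subspace then some nonzero `F ∈ A*` vanishes on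
all products. Then `D a = F a • F` is a derivation, both sides of the Leibniz identity being zero,
and it is not cyclic: `⟨D a, a⟩ = F a ^ 2` is nonzero for some `a`.
-/

section Density

open RCLike

variable {𝕜 E : Type*} [RCLike 𝕜] [AddCommGroup E] [Module 𝕜 E]

theorem eq_zero_of_forall_mem_re_lt {p : Submodule 𝕜 E} {f : E →ₗ[𝕜] 𝕜} {u : ℝ}
    (hu : ∀ y ∈ p, re (f y) < u) {y : E} (hy : y ∈ p) : f y = 0 := by
  by_contra hfy
  have hlt : re (f (((u : 𝕜) / f y) • y)) < u := hu _ (p.smul_mem _ hy)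
  rw [map_smul, smul_eq_mul, div_mul_cancel₀ _ hfy, ofReal_re] at hlt
  exact hlt.false

theorem dense_of_forall_dual_eq_zero [Module ℝ E] [IsScalarTower ℝ 𝕜 E] [TopologicalSpace E]
    [IsTopologicalAddGroup E] [ContinuousSMul 𝕜 E] [LocallyConvexSpace ℝ E] {p : Submodule 𝕜 E}
    (hp : ∀ f : E →L[𝕜] 𝕜, (∀ y ∈ p, f y = 0) → f = 0) : Dense (p : Set E) := by
  intro x
  by_contra hx
  have : ContinuousSMul ℝ E := IsScalarTower.continuousSMul 𝕜
  have hconv : Convex ℝ (closure (p : Set E)) := (p.restrictScalars ℝ).convex.closure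
  obtain ⟨f, u, hfu, hux⟩ :=
    geometric_hahn_banach_closed_point (𝕜 := 𝕜) hconv isClosed_closure hx
  have hlt : ∀ y ∈ p, re (f y) < u := fun y hy ↦ hfu y (subset_closure hy)
  have hf : f = 0 := hp f fun y hy ↦ eq_zero_of_forall_mem_re_lt (f := f.toLinearMap) hlt hy
  have hxu : re (f x) < u := by simpa only [hf, zero_apply] using hlt 0 p.zero_mem
  exact lt_asymm hxu hux

end Density

section Algebra

variable {A : Type*} [NonUnitalNormedRing A] [NormedSpace ℂ A]

theorem essential_of_forall_dual_eq_zero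
    (hA : ∀ F : A →L[ℂ] ℂ, (∀ a b : A, F (a * b) = 0) → F = 0) : Essential A :=
  dense_of_forall_dual_eq_zero fun F hF ↦
    hA F fun a b ↦ hF (a * b) (Submodule.subset_span ⟨a, b, rfl⟩)

theorem isDerivation_smulRight {F G : A →L[ℂ] ℂ} (hF : ∀ a b : A, F (a * b) = 0)
    (hG : ∀ a b : A, G (a * b) = 0) : IsDerivation (F.smulRight G) := by
  intro a b x
  simp only [ContinuousLinearMap.smulRight_apply, smul_apply, zero_apply, hF, hG, zero_smul,
    smul_zero, add_zero]

theorem IsCyclicDerivation.apply_self_eq_zero {D : A →L[ℂ] A →L[ℂ] ℂ} (hD : IsCyclicDerivation D)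
    (a : A) : D a a = 0 :=
  self_eq_neg.mp (eq_neg_of_add_eq_zero_left (hD a a))

theorem IsCyclicDerivation.eq_zero_of_smulRight_self {F : A →L[ℂ] ℂ}
    (hF : IsCyclicDerivation (F.smulRight F)) : F = 0 := by
  ext a
  exact mul_self_eq_zero.mp (hF.apply_self_eq_zero a)

end Algebra

theorem essential_of_cyclicallyWeaklyAmenable_general
    (A : Type*) [NonUnitalNormedRing A] [NormedSpace ℂ A]
    (h : CyclicallyWeaklyAmenable A) : Essential A :=
  essential_of_forall_dual_eq_zero fun F hF ↦
    (h (F.smulRight F) (isDerivation_smulRight hF hF)).eq_zero_of_smulRight_self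

/-- Every cyclically weakly amenable complex Banach algebra is essential. -/
theorem essential_of_cyclicallyWeaklyAmenable
    (A : Type*) [NonUnitalNormedRing A] [NormedSpace ℂ A]
    [IsScalarTower ℂ A A] [SMulCommClass ℂ A A] [CompleteSpace A]
    (h : CyclicallyWeaklyAmenable A) : Essential A :=
  essential_of_cyclicallyWeaklyAmenable_general A h
end

section
/- Let A be a complex Banach algebra, φ ∈ Δ(A), and d ∈ A*. Then d is a continuous point derivation at φ if and only if the operator 𝔇_{d,φ} : A → A* is a derivation. In this case, d(xy) = 0 for all x, y ∈ ker φ. -/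
section

variable {A : Type*} [NonUnitalNormedRing A] [NormedSpace ℂ A] {φ d : A →L[ℂ] ℂ}

theorem isDerivation_smulRight_iff_smul_eq_smul (hφ : ∀ a b, φ (a * b) = φ a * φ b) :
    IsDerivation (d.smulRight φ) ↔ ∀ a b, d (a * b) • φ = (d a * φ b + φ a * d b) • φ := by
  have leibniz_rhs (a b x : A) :
      d a * φ (b * x) + d b * φ (x * a) = (d a * φ b + φ a * d b) * φ x := by
    rw [hφ, hφ]
    ring
  simp only [IsDerivation, ContinuousLinearMap.ext_iff, ContinuousLinearMap.smulRight_apply,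
    smul_apply, smul_eq_mul, leibniz_rhs]

theorem IsCharacter.isDerivation_smulRight_iff (hφ : IsCharacter φ) :
    IsDerivation (d.smulRight φ) ↔ IsPointDerivation φ d := by
  simp only [isDerivation_smulRight_iff_smul_eq_smul hφ.2, smul_left_inj hφ.1, IsPointDerivation]

theorem IsPointDerivation.map_mul_eq_zero (hd : IsPointDerivation φ d) {x y : A}
    (hx : φ x = 0) (hy : φ y = 0) : d (x * y) = 0 := by
  rw [hd, hx, hy, mul_zero, zero_mul, add_zero]

end

theorem isPointDerivation_iff_smulRight_isDerivation_general
    {A : Type*} [NonUnitalNormedRing A] [NormedSpace ℂ A]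
    (φ d : A →L[ℂ] ℂ) (hφ : IsCharacter φ) :
    (IsPointDerivation φ d ↔ IsDerivation (d.smulRight φ)) ∧
    (IsPointDerivation φ d → ∀ x y : A, φ x = 0 → φ y = 0 → d (x * y) = 0) :=
  ⟨hφ.isDerivation_smulRight_iff.symm, fun hd _ _ hx hy ↦ hd.map_mul_eq_zero hx hy⟩

/-- For `φ ∈ Δ(A)` and `d ∈ A*`: `d` is a continuous point derivation at `φ` iff
`𝔇_{d,φ} : a ↦ d(a)φ` is a derivation `A → A*`; in this case `d` vanishes on
products of elements of `ker φ`. -/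
theorem isPointDerivation_iff_smulRight_isDerivation
    {A : Type*} [NonUnitalNormedRing A] [NormedSpace ℂ A]
    [IsScalarTower ℂ A A] [SMulCommClass ℂ A A] [CompleteSpace A]
    (φ d : A →L[ℂ] ℂ) (hφ : IsCharacter φ) :
    (IsPointDerivation φ d ↔ IsDerivation (d.smulRight φ)) ∧
    (IsPointDerivation φ d → ∀ x y : A, φ x = 0 → φ y = 0 → d (x * y) = 0) :=
  isPointDerivation_iff_smulRight_isDerivation_general φ d hφ
end

section
/- Let A be an essential complex Banach algebra, φ ∈ Δ(A), and d a nonzero element of A*. Then d is a continuous point derivation at φ if and only if 𝔇_{d,φ} is a continuous derivation from A into A* that is not cyclic. -/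
/-!
As `φ` is multiplicative, evaluating the derivation identity of `𝔇_{d,φ}` at `x` gives the point
derivation identity of `d` multiplied by `φ x`, a factor that cancels once `φ x ≠ 0`. The bilinear
form `(a, b) ↦ d a * φ b` has rank at most one, and outside characteristic two such a form is
skew-symmetric only if it vanishes; so `𝔇_{d,φ}` is cyclic only if `d = 0` or `φ = 0`.
-/

theorem forall_mul_add_mul_swap_eq_zero_iff {α R : Type*} [NonAssocSemiring R]
    [NoZeroDivisors R] [NeZero (2 : R)] {f g : α → R} :
    (∀ a b, f a * g b + f b * g a = 0) ↔ f = 0 ∨ g = 0 := by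
  constructor
  · intro h
    refine or_iff_not_imp_right.mpr fun hg => ?_
    obtain ⟨u, hu⟩ : ∃ u, g u ≠ 0 := Function.ne_iff.mp hg
    have hfu : f u = 0 := by
      have hdiag : 2 * (f u * g u) = 0 := by simpa only [two_mul] using h u u
      exact (mul_eq_zero.mp ((mul_eq_zero.mp hdiag).resolve_left two_ne_zero)).resolve_right hu
    funext a
    have hau : f a * g u = 0 := by simpa only [hfu, zero_mul, add_zero] using h a u
    exact (mul_eq_zero.mp hau).resolve_right hu
  · rintro (rfl | rfl) <;> simp

section

variable {A : Type*} [NonUnitalNormedRing A] [NormedSpace ℂ A] {φ d : A →L[ℂ] ℂ}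

theorem isCyclicDerivation_smulRight_iff :
    IsCyclicDerivation (d.smulRight φ) ↔ d = 0 ∨ φ = 0 := by
  simpa only [IsCyclicDerivation, ContinuousLinearMap.smulRight_apply, smul_apply, smul_eq_mul,
    ← DFunLike.coe_fn_eq, FunLike.coe_zero] using
    forall_mul_add_mul_swap_eq_zero_iff (f := d) (g := φ)

end

theorem isPointDerivation_iff_smulRight_not_cyclic_general
    {A : Type*} [NonUnitalNormedRing A] [NormedSpace ℂ A]
    (φ d : A →L[ℂ] ℂ) (hφ : IsCharacter φ) (hd : d ≠ 0) :
    IsPointDerivation φ d ↔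
      (IsDerivation (d.smulRight φ) ∧ ¬ IsCyclicDerivation (d.smulRight φ)) := by
  have not_cyclic : ¬ IsCyclicDerivation (d.smulRight φ) := fun h =>
    (isCyclicDerivation_smulRight_iff.mp h).elim hd hφ.1
  rw [hφ.isDerivation_smulRight_iff, and_iff_left not_cyclic]

/-- For an essential Banach algebra `A`, `φ ∈ Δ(A)` and a nonzero `d ∈ A*`:
`d` is a continuous point derivation at `φ` iff `𝔇_{d,φ}` is a continuous
derivation `A → A*` which is not cyclic. -/
theorem isPointDerivation_iff_smulRight_not_cyclic
    {A : Type*} [NonUnitalNormedRing A] [NormedSpace ℂ A]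
    [IsScalarTower ℂ A A] [SMulCommClass ℂ A A] [CompleteSpace A]
    (hA : Essential A) (φ d : A →L[ℂ] ℂ) (hφ : IsCharacter φ) (hd : d ≠ 0) :
    IsPointDerivation φ d ↔
      (IsDerivation (d.smulRight φ) ∧ ¬ IsCyclicDerivation (d.smulRight φ)) :=
  isPointDerivation_iff_smulRight_not_cyclic_general φ d hφ hd
end

section
/- Let A be a complex Banach algebra, let D : A → A* be a continuous linear operator, and define the bounded bilinear functional p : A × A → ℂ by p(a, b) = ⟨D(a), b⟩. Then: (i) D is a derivation if and only if p is a quasi-additive functional of A; (ii) D is an inner derivation if and only if p is an inner quasi-additive functional of A; (iii) D is a cyclic derivation if and only if p is a cyclic quasi-additive functional of A; (iv) if A is unital with identity 1, then D is a cyclic derivation if and only if p is a quasi-additive functional with p(a, 1) = 0 for all a ∈ A. -/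
/-- A quasi-additive functional of `A`: a bounded bilinear functional `p` with
`p(ax, b) = p(a, xb) + p(x, ba)`. -/
def IsQuasiAdditive {A : Type*} [NonUnitalNormedRing A] [NormedSpace ℂ A]
    (p : A →L[ℂ] A →L[ℂ] ℂ) : Prop :=
  ∀ a x b : A, p (a * x) b = p a (x * b) + p x (b * a)

/-- An inner quasi-additive functional: `p(a, b) = F(ab - ba)` for some `F ∈ A*`. -/
def IsInnerQuasiAdditive {A : Type*} [NonUnitalNormedRing A] [NormedSpace ℂ A]
    (p : A →L[ℂ] A →L[ℂ] ℂ) : Prop :=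
  ∃ F : A →L[ℂ] ℂ, ∀ a b : A, p a b = F (a * b - b * a)

/-- A cyclic quasi-additive functional: `p(a, a) = 0` for all `a`. -/
def IsCyclicQuasiAdditive {A : Type*} [NonUnitalNormedRing A] [NormedSpace ℂ A]
    (p : A →L[ℂ] A →L[ℂ] ℂ) : Prop :=
  ∀ a : A, p a a = 0

section

variable {A : Type*} [NonUnitalNormedRing A] [NormedSpace ℂ A] {D : A →L[ℂ] A →L[ℂ] ℂ}

theorem isInnerDerivation_iff_isInnerQuasiAdditive :
    IsInnerDerivation D ↔ IsInnerQuasiAdditive D := by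
  simp only [IsInnerDerivation, IsInnerQuasiAdditive, map_sub]

theorem isCyclicDerivation_iff_isCyclicQuasiAdditive :
    IsCyclicDerivation D ↔ IsCyclicQuasiAdditive D := by
  refine ⟨fun hcyc a => add_self_eq_zero.mp (hcyc a a), fun hdiag a b => ?_⟩
  have isAlt : D.toBilinForm.IsAlt := hdiag
  exact neg_eq_iff_add_eq_zero.mp (isAlt.neg_eq a b)

namespace IsDerivation

variable {e : A}

theorem map_identity_eq_zero (hD : IsDerivation D)
    (he_left : ∀ a, e * a = a) (he_right : ∀ a, a * e = a) : D e = 0 := by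
  ext x
  have leibniz : D e x = D e x + D e x := by
    simpa only [he_left, he_right] using hD e e x
  exact left_eq_add.mp leibniz

theorem isCyclicDerivation_of_apply_leftIdentity_eq_zero (hD : IsDerivation D)
    (he : ∀ a, e * a = a) (hDe : ∀ a, D a e = 0) : IsCyclicDerivation D := by
  have cyclic_mul_e (a b : A) : D a (b * e) + D b a = 0 := by
    simpa only [hDe, he] using (hD a b e).symm
  have map_e (a : A) : D e a = 0 := by
    simpa only [he, hDe, zero_add] using cyclic_mul_e a e
  have apply_mul_e (a b : A) : D a (b * e) = D a b := by
    simpa only [he, map_e, zero_add] using (hD e a b).symm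
  intro a b
  simpa only [apply_mul_e] using cyclic_mul_e a b

theorem isCyclicDerivation_iff_apply_identity_eq_zero (hD : IsDerivation D)
    (he_left : ∀ a, e * a = a) (he_right : ∀ a, a * e = a) :
    IsCyclicDerivation D ↔ ∀ a, D a e = 0 := by
  refine ⟨fun hcyc a => ?_, hD.isCyclicDerivation_of_apply_leftIdentity_eq_zero he_left⟩
  simpa only [hD.map_identity_eq_zero he_left he_right, zero_apply, add_zero]
    using hcyc a e

end IsDerivation

end

theorem derivation_iff_quasiAdditive_general
    {A : Type*} [NonUnitalNormedRing A] [NormedSpace ℂ A]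
    (D p : A →L[ℂ] A →L[ℂ] ℂ) (hp : ∀ a b : A, p a b = D a b) :
    (IsDerivation D ↔ IsQuasiAdditive p) ∧
    (IsInnerDerivation D ↔ IsInnerQuasiAdditive p) ∧
    ((IsDerivation D ∧ IsCyclicDerivation D) ↔
      (IsQuasiAdditive p ∧ IsCyclicQuasiAdditive p)) ∧
    (∀ e : A, (∀ a : A, e * a = a) → (∀ a : A, a * e = a) →
      ((IsDerivation D ∧ IsCyclicDerivation D) ↔
        (IsQuasiAdditive p ∧ ∀ a : A, p a e = 0))) := by
  obtain rfl : p = D := by ext a b; exact hp a b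
  refine ⟨Iff.rfl, isInnerDerivation_iff_isInnerQuasiAdditive,
    and_congr_right' isCyclicDerivation_iff_isCyclicQuasiAdditive, ?_⟩
  intro e he_left he_right
  exact and_congr_right fun hD =>
    hD.isCyclicDerivation_iff_apply_identity_eq_zero he_left he_right

/-- For a continuous linear `D : A → A*` and the bounded bilinear functional
`p(a, b) = ⟨D(a), b⟩`: (i) `D` is a derivation iff `p` is quasi-additive; (ii) `D` is an
inner derivation iff `p` is an inner quasi-additive functional; (iii) `D` is a cyclic
derivation iff `p` is a cyclic quasi-additive functional; (iv) if `A` has an identity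
`e`, then `D` is a cyclic derivation iff `p` is quasi-additive and `p(a, e) = 0`. -/
theorem derivation_iff_quasiAdditive
    {A : Type*} [NonUnitalNormedRing A] [NormedSpace ℂ A]
    [IsScalarTower ℂ A A] [SMulCommClass ℂ A A] [CompleteSpace A]
    (D p : A →L[ℂ] A →L[ℂ] ℂ) (hp : ∀ a b : A, p a b = D a b) :
    (IsDerivation D ↔ IsQuasiAdditive p) ∧
    (IsInnerDerivation D ↔ IsInnerQuasiAdditive p) ∧
    ((IsDerivation D ∧ IsCyclicDerivation D) ↔
      (IsQuasiAdditive p ∧ IsCyclicQuasiAdditive p)) ∧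
    (∀ e : A, (∀ a : A, e * a = a) → (∀ a : A, a * e = a) →
      ((IsDerivation D ∧ IsCyclicDerivation D) ↔
        (IsQuasiAdditive p ∧ ∀ a : A, p a e = 0))) :=
  derivation_iff_quasiAdditive_general D p hp
end

section
/- Let A be a commutative complex Banach algebra. Then A is weakly amenable if and only if A is cyclically weakly amenable. -/
/-!
In a commutative algebra, replacing `D` by `a ↦ D(a)·c` yields another derivation, and cyclicity of
the latter is exactly the vanishing of `D` on products. So each functional `a ↦ ⟨D(a), b⟩` kills
products. If `f` is any functional killing products, then `a ↦ f(a) f` is a derivation, and its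
cyclicity reads `2 f(a)² = 0` on the diagonal. Hence `D = 0`, which is inner.
-/

section NonUnitalNormedRing

variable {A : Type*} [NonUnitalNormedRing A] [NormedSpace ℂ A]

theorem IsInnerDerivation.isCyclicDerivation {D : A →L[ℂ] A →L[ℂ] ℂ} (hD : IsInnerDerivation D) :
    IsCyclicDerivation D := by
  obtain ⟨F, hF⟩ := hD
  intro a b
  rw [hF a b, hF b a, sub_add_sub_cancel, sub_self]

theorem WeaklyAmenable.cyclicallyWeaklyAmenable (hA : WeaklyAmenable A) :
    CyclicallyWeaklyAmenable A :=
  fun D hD => (hA D hD).isCyclicDerivation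

theorem isDerivation_smulRight_s14 {f g : A →L[ℂ] ℂ} (hf : ∀ a b, f (a * b) = 0)
    (hg : ∀ a b, g (a * b) = 0) : IsDerivation (f.smulRight g) := by
  intro a b x
  simp [hf, hg]

theorem CyclicallyWeaklyAmenable.eq_zero_of_map_mul_eq_zero (hA : CyclicallyWeaklyAmenable A)
    {f : A →L[ℂ] ℂ} (hf : ∀ a b, f (a * b) = 0) : f = 0 := by
  ext a
  have diagonal : f a * f a + f a * f a = 0 := hA _ (isDerivation_smulRight_s14 hf hf) a a
  exact mul_self_eq_zero.mp (add_self_eq_zero.mp diagonal)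

end NonUnitalNormedRing

section NonUnitalNormedCommRing

variable {A : Type*} [NonUnitalNormedCommRing A] [NormedSpace ℂ A]
  [IsScalarTower ℂ A A] [SMulCommClass ℂ A A] {D : A →L[ℂ] A →L[ℂ] ℂ}

theorem IsDerivation.precomp_mul (hD : IsDerivation D) (c : A) :
    IsDerivation ((ContinuousLinearMap.mul ℂ A c).precomp ℂ ∘L D) := by
  intro a b x
  calc D (a * b) (c * x)
      = D a (b * (c * x)) + D b (c * x * a) := hD a b (c * x)
    _ = D a (c * (b * x)) + D b (c * (x * a)) := by rw [mul_left_comm, mul_assoc]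

theorem IsDerivation.map_mul_eq_zero (hD : IsDerivation D) (hA : CyclicallyWeaklyAmenable A)
    (a b : A) : D (a * b) = 0 := by
  ext c
  calc D (a * b) c
      = D a (b * c) + D b (c * a) := hD a b c
    _ = D a (c * b) + D b (c * a) := by rw [mul_comm b c]
    _ = 0 := hA _ (hD.precomp_mul c) a b

theorem IsDerivation.eq_zero (hD : IsDerivation D) (hA : CyclicallyWeaklyAmenable A) : D = 0 := by
  ext a b
  have flip_map_mul (x y : A) : D.flip b (x * y) = 0 := by
    rw [ContinuousLinearMap.flip_apply, hD.map_mul_eq_zero hA, zero_apply]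
  exact DFunLike.congr_fun (hA.eq_zero_of_map_mul_eq_zero flip_map_mul) a

end NonUnitalNormedCommRing

theorem weaklyAmenable_iff_cyclicallyWeaklyAmenable_of_comm_general
    (A : Type*) [NonUnitalNormedCommRing A] [NormedSpace ℂ A]
    [IsScalarTower ℂ A A] [SMulCommClass ℂ A A] :
    WeaklyAmenable A ↔ CyclicallyWeaklyAmenable A := by
  refine ⟨WeaklyAmenable.cyclicallyWeaklyAmenable, fun hA D hD => ?_⟩
  rw [hD.eq_zero hA]
  exact ⟨0, fun _ _ => (sub_self 0).symm⟩

/-- A commutative Banach algebra is weakly amenable iff it is cyclically weakly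
amenable. -/
theorem weaklyAmenable_iff_cyclicallyWeaklyAmenable_of_comm
    (A : Type*) [NonUnitalNormedCommRing A] [NormedSpace ℂ A]
    [IsScalarTower ℂ A A] [SMulCommClass ℂ A A] [CompleteSpace A] :
    WeaklyAmenable A ↔ CyclicallyWeaklyAmenable A :=
  weaklyAmenable_iff_cyclicallyWeaklyAmenable_of_comm_general A
end

section
/- Let A be a weakly amenable complex Banach algebra, let φ ∈ Δ(A), and let d be a nonzero element of A*. Then 𝔇_{d,φ} is not a derivation from A into A*. -/
/-! An inner derivation `D : A → A*` is cyclic, that is, the bilinear form `⟨D(a), b⟩` is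
antisymmetric. But a nonzero rank-one form `d(a) φ(b)` is never antisymmetric: if `φ(u) ≠ 0`, then
the pair `(u, u)` gives `d(u) = 0`, and then `(a, u)` gives `d(a) = 0` for every `a`. -/

theorem eq_zero_or_eq_zero_of_mul_add_mul_eq_zero {ι R : Type*} [NonAssocSemiring R]
    [NoZeroDivisors R] [NeZero (2 : R)] {f g : ι → R}
    (h : ∀ i j, f i * g j + f j * g i = 0) : f = 0 ∨ g = 0 := by
  refine or_iff_not_imp_right.mpr fun hg => ?_
  obtain ⟨u, hgu⟩ : ∃ u, g u ≠ 0 := Function.ne_iff.mp hg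
  have hfu : f u = 0 := by
    simpa only [← two_mul, mul_eq_zero, two_ne_zero, hgu, false_or, or_false] using h u u
  funext i
  have hfi : f i * g u = 0 := by simpa only [hfu, zero_mul, add_zero] using h i u
  exact (mul_eq_zero.mp hfi).resolve_right hgu

section

variable {A : Type*} [NonUnitalNormedRing A] [NormedSpace ℂ A]

theorem IsCyclicDerivation.eq_zero_or_eq_zero_of_smulRight {d φ : A →L[ℂ] ℂ}
    (h : IsCyclicDerivation (d.smulRight φ)) : d = 0 ∨ φ = 0 :=
  (eq_zero_or_eq_zero_of_mul_add_mul_eq_zero h).imp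
    (DFunLike.coe_injective ·) (DFunLike.coe_injective ·)

theorem smulRight_not_derivation_of_weaklyAmenable_general (hA : CyclicallyWeaklyAmenable A)
    {φ d : A →L[ℂ] ℂ} (hφ : φ ≠ 0) (hd : d ≠ 0) : ¬ IsDerivation (d.smulRight φ) :=
  fun hD => (hA _ hD).eq_zero_or_eq_zero_of_smulRight.elim hd hφ

end

/-- If `A` is weakly amenable, `φ ∈ Δ(A)` and `d ∈ A*` is nonzero, then
`𝔇_{d,φ} : a ↦ d(a)φ` is not a derivation `A → A*`. -/
theorem smulRight_not_derivation_of_weaklyAmenable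
    {A : Type*} [NonUnitalNormedRing A] [NormedSpace ℂ A]
    [IsScalarTower ℂ A A] [SMulCommClass ℂ A A] [CompleteSpace A]
    (hA : WeaklyAmenable A) (φ d : A →L[ℂ] ℂ) (hφ : IsCharacter φ) (hd : d ≠ 0) :
    ¬ IsDerivation (d.smulRight φ) :=
  smulRight_not_derivation_of_weaklyAmenable_general hA.cyclicallyWeaklyAmenable hφ.1 hd
end

section
/- Let A be a complex Banach algebra such that the closed linear span of the set of idempotent elements of A equals A. Then: (i) A is 0-point amenable; (ii) if moreover A is commutative, then A is cyclically amenable and cyclically weakly amenable. -/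
/-!
If `p` is an idempotent additive endomorphism and `x = p x + p x`, then applying `p` gives
`p x = p x + p x`, so `p x = 0` and hence `x = 0`. At an idempotent `e = e * e` the Leibniz rule
puts the value of a point derivation at `φ` in this form, with `p` multiplication by `φ e`; if `A`
is commutative, it does the same for a derivation `A → A*`, with `p` the action of `e` on `A*`.
Being continuous, these maps vanish as soon as the idempotents have dense span.
-/

theorem eq_zero_of_isIdempotentElem_of_eq_apply_add_apply {M : Type*} [AddLeftCancelMonoid M]
    {p : AddMonoid.End M} (hp : IsIdempotentElem p) {x : M} (hx : x = p x + p x) : x = 0 := by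
  have p_fixes (y : M) : p (p y) = p y := DFunLike.congr_fun hp y
  have hpx : p x = p x + p x := calc
    p x = p (p x) + p (p x) := by rw [← map_add, ← hx]
    _ = p x + p x := by rw [p_fixes]
  rw [hx, left_eq_add.mp hpx, add_zero]

section NormedAlgebra

variable {A : Type*} [NonUnitalNormedRing A] [NormedSpace ℂ A]

theorem IsPointDerivation.apply_eq_zero_of_isIdempotentElem {φ d : A →L[ℂ] ℂ}
    (hd : IsPointDerivation φ d) {e : A} (he : IsIdempotentElem e)
    (hφe : IsIdempotentElem (φ e)) : d e = 0 := by
  have hp : IsIdempotentElem (M := AddMonoid.End ℂ) (AddMonoidHom.mulLeft (φ e)) := by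
    ext z
    change φ e * (φ e * z) = φ e * z
    rw [← mul_assoc, hφe.eq]
  refine eq_zero_of_isIdempotentElem_of_eq_apply_add_apply hp ?_
  calc
    d e = d (e * e) := by rw [he.eq]
    _ = d e * φ e + φ e * d e := hd e e
    _ = φ e * d e + φ e * d e := by rw [mul_comm (d e)]

theorem IsDerivation.apply_eq_zero_of_isIdempotentElem {D : A →L[ℂ] A →L[ℂ] ℂ}
    (hD : IsDerivation D) {e : A} (he : IsIdempotentElem e) (hcomm : ∀ x, Commute e x) :
    D e = 0 := by
  have hp : IsIdempotentElem (M := AddMonoid.End (A →+ ℂ))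
      (AddMonoidHom.compHom' (AddMonoidHom.mulLeft e)) := by
    ext F x
    change F (e * (e * x)) = F (e * x)
    rw [← mul_assoc, he.eq]
  have hDe : (D e : A →+ ℂ) = 0 := by
    refine eq_zero_of_isIdempotentElem_of_eq_apply_add_apply hp ?_
    ext x
    calc
      D e x = D (e * e) x := by rw [he.eq]
      _ = D e (e * x) + D e (x * e) := hD e e x
      _ = D e (e * x) + D e (e * x) := by rw [(hcomm x).eq]
  ext x
  exact DFunLike.congr_fun hDe x

theorem zeroPointAmenable_of_dense_span_idempotents
    (hspan : Dense (Submodule.span ℂ {e : A | e * e = e} : Set A)) : ZeroPointAmenable A := by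
  intro φ d hφ hd
  have hφ_mul (a b : A) : φ (a * b) = φ a * φ b := by
    rcases hφ with hφ | rfl
    · exact hφ.2 a b
    · simp
  refine ContinuousLinearMap.ext_on hspan fun e he => ?_
  have hφe : IsIdempotentElem (φ e) := by
    rw [IsIdempotentElem, ← hφ_mul, he]
  exact hd.apply_eq_zero_of_isIdempotentElem he hφe

theorem IsDerivation.eq_zero_of_dense_span_idempotents
    (hspan : Dense (Submodule.span ℂ {e : A | e * e = e} : Set A))
    (hcomm : ∀ a b : A, a * b = b * a) {D : A →L[ℂ] A →L[ℂ] ℂ} (hD : IsDerivation D) : D = 0 :=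
  ContinuousLinearMap.ext_on hspan fun e he =>
    hD.apply_eq_zero_of_isIdempotentElem he (hcomm e)

end NormedAlgebra

theorem spanned_by_idempotents_amenability_general
    (A : Type*) [NonUnitalNormedRing A] [NormedSpace ℂ A]
    (hspan : Dense ((Submodule.span ℂ {e : A | e * e = e} : Submodule ℂ A) : Set A)) :
    ZeroPointAmenable A ∧
    ((∀ a b : A, a * b = b * a) →
      (WeaklyAmenable A ∧ CyclicallyWeaklyAmenable A)) := by
  refine ⟨zeroPointAmenable_of_dense_span_idempotents hspan, fun hcomm => ⟨?_, ?_⟩⟩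
  · intro D hD
    obtain rfl : D = 0 := hD.eq_zero_of_dense_span_idempotents hspan hcomm
    exact ⟨0, by simp⟩
  · intro D hD
    obtain rfl : D = 0 := hD.eq_zero_of_dense_span_idempotents hspan hcomm
    simp [IsCyclicDerivation]

/-- If a Banach algebra `A` is the closed linear span of its idempotents, then
(i) `A` is 0-point amenable; (ii) if moreover `A` is commutative, then `A` is
cyclically amenable and cyclically weakly amenable. -/
theorem spanned_by_idempotents_amenability
    (A : Type*) [NonUnitalNormedRing A] [NormedSpace ℂ A]
    [IsScalarTower ℂ A A] [SMulCommClass ℂ A A] [CompleteSpace A]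
    (hspan : Dense ((Submodule.span ℂ {e : A | e * e = e} : Submodule ℂ A) : Set A)) :
    ZeroPointAmenable A ∧
    ((∀ a b : A, a * b = b * a) →
      (CyclicallyAmenable A ∧ CyclicallyWeaklyAmenable A)) :=
  (spanned_by_idempotents_amenability_general A hspan).imp_right fun h hcomm =>
    (h hcomm).imp_left fun hweak D hD _ => hweak D hD
end
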